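/- Assume the Diophantine setting of the context and set τ₁ := 2·(15/2 + 3/(2 ln 2))·(2+q). Then for all finitely supported α, β : ℤ → ℕ with equal total mass |α| = |β| ≥ 1, α ≠ β, zero momentum ∑_{i∈ℤ} i·(α_i − β_i) = 0, and every j ∈ ℤ with α_j + β_j ≥ 1, one has γ · ⌈j⌉^{2τ₁} ≤ 6^{τ₁} · (4⁶ e^{27})^{2+q} · |∑_{i∈ℤ} ω_i (α_i − β_i)| · ∏_{i∈ℤ} ⌈i⌉^{τ₁(α_i+β_i)}. -/

import Mathlib

open scoped BigOperators

/-- `⟨j⟩ := max(|j|,1)` as a real number. -/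
noncomputable def jap (j : ℤ) : ℝ := max (|(j : ℝ)|) 1

/-- `⌈j⌉ := max(|j|,2)` as a real number. -/
noncomputable def jml (j : ℤ) : ℝ := max (|(j : ℝ)|) 2

/-!
List the modes of `ℓ = α - β` with multiplicity `|ℓ i|` and sign `± 1`, and let `Π` be the product
of `⌈·⌉` over this list. The Diophantine condition gives `γ ≤ D Π ^ (3 W / 2)` for the divisor
`D = |∑ ω i ℓ i|` and `W = 2 + q`. If `D ≥ 1`, zero momentum alone gives `⌈j⌉ ^ 2 ≤ Π`.
If `D < 1`, single out `j` and the largest remaining mode `b`, and let `P` be the product over the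
`K ≥ 1` other modes. Conservation of momentum and near conservation of `∑ ± i ^ 2` bound `j ∓ b` and
`j ^ 2 ∓ b ^ 2` by `2 P ^ 2`, hence `⌈j⌉, ⌈b⌉ ≤ 2 P ^ 2` and `Π ≤ 4 P ^ 5`. Momentum also gives
`⌈j⌉ ≤ (K + 1) ⌈b⌉`, where `(K + 1) ^ 2 ≤ 4 * 2 ^ K ≤ 4 P`, so that `⌈j⌉ ^ 2 √P ≤ 2 Π`: the
factor `√P` gained here, raised to the power `τ ≥ 15 W`, absorbs the loss `Π ^ (3 W / 2)`.
A mode `j` cancelled in `ℓ` contributes `⌈j⌉ ^ 2` to the weight of `α + β` on top of `Π`.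
-/

section Elementary

variable {ι : Type*}

lemma two_le_prod {R : Finset ι} (hR : R.Nonempty) {f : ι → ℝ} (hf : ∀ a ∈ R, 2 ≤ f a) :
    2 ≤ ∏ a ∈ R, f a := by
  induction hR using Finset.Nonempty.cons_induction with
  | singleton a => simpa using hf
  | cons a s ha _ ih =>
    rw [Finset.forall_mem_cons] at hf
    rw [Finset.prod_cons]
    nlinarith [ih hf.2]

lemma sum_le_prod_of_two_le {R : Finset ι} (hR : R.Nonempty) {f : ι → ℝ}
    (hf : ∀ a ∈ R, 2 ≤ f a) : ∑ a ∈ R, f a ≤ ∏ a ∈ R, f a := by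
  induction hR using Finset.Nonempty.cons_induction with
  | singleton a => simp
  | cons a s ha hs ih =>
    rw [Finset.forall_mem_cons] at hf
    rw [Finset.sum_cons, Finset.prod_cons]
    nlinarith [ih hf.2, two_le_prod hs hf.2]

lemma sq_add_self_add_two_le_two_mul_two_pow (n : ℕ) : n ^ 2 + n + 2 ≤ 2 * 2 ^ n := by
  induction n with
  | zero => norm_num
  | succ n ih =>
    rw [pow_succ 2 n]
    nlinarith [Nat.le_self_pow two_ne_zero n]

lemma one_add_sq_mul_sq_le_pow {z : ℝ} (hz : 2 ≤ z) (k : ℕ) :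
    1 + (k : ℝ) ^ 2 * z ^ 2 ≤ z ^ (3 * k) := by
  have hz_cube : 2 * z ^ 2 ≤ z ^ 3 := by nlinarith [sq_nonneg z]
  induction k with
  | zero => simp
  | succ k ih =>
    have hz_sq : 4 ≤ z ^ 2 := by nlinarith
    calc 1 + ((k + 1 : ℕ) : ℝ) ^ 2 * z ^ 2
        ≤ (2 + 8 * (k : ℝ) ^ 2) * z ^ 2 := by
          push_cast
          nlinarith [mul_nonneg (sq_nonneg ((k : ℝ) - 1 / 7)) (sq_nonneg z)]
      _ = 1 * (2 * z ^ 2) + (k : ℝ) ^ 2 * z ^ 2 * (2 * 4) := by ring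
      _ ≤ 1 * z ^ 3 + (k : ℝ) ^ 2 * z ^ 2 * z ^ 3 := by gcongr; linarith
      _ = (1 + (k : ℝ) ^ 2 * z ^ 2) * z ^ 3 := by ring
      _ ≤ z ^ (3 * k) * z ^ 3 := by gcongr
      _ = z ^ (3 * (k + 1)) := by ring

lemma abs_sum_mul_le_of_abs_eq_one {R : Finset ι} {s : ι → ℝ} (hs : ∀ a ∈ R, |s a| = 1)
    (f : ι → ℝ) : |∑ a ∈ R, s a * f a| ≤ ∑ a ∈ R, |f a| := by
  refine (Finset.abs_sum_le_sum_abs _ _).trans_eq (Finset.sum_congr rfl fun a ha => ?_)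
  rw [abs_mul, hs a ha, one_mul]

lemma abs_pair_le_of_abs_eq_one [DecidableEq ι] {T : Finset ι} {s : ι → ℝ}
    (hs : ∀ a ∈ T, |s a| = 1) {a b : ι} (ha : a ∈ T) (hb : b ∈ T.erase a) (f : ι → ℝ) :
    |s a * f a + s b * f b| ≤ |∑ c ∈ T, s c * f c| + ∑ c ∈ (T.erase a).erase b, |f c| := by
  have hsplit : s a * f a + s b * f b =
      ∑ c ∈ T, s c * f c - ∑ c ∈ (T.erase a).erase b, s c * f c := by
    rw [← Finset.add_sum_erase _ _ ha, ← Finset.add_sum_erase _ _ hb]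
    ring
  rw [hsplit]
  refine (abs_sub _ _).trans (add_le_add_right (abs_sum_mul_le_of_abs_eq_one ?_ f) _)
  exact fun c hc => hs c (Finset.mem_of_mem_erase (Finset.mem_of_mem_erase hc))

lemma abs_le_of_abs_sub_le_of_abs_sq_sub_sq_le {x y : ℤ} (hxy : x ≠ y) {A : ℝ}
    (hsub : |(x : ℝ) - y| ≤ A) (hsq : |(x : ℝ) ^ 2 - (y : ℝ) ^ 2| ≤ A) : |(x : ℝ)| ≤ A := by
  have hone : (1 : ℝ) ≤ |(x : ℝ) - y| := mod_cast Int.one_le_abs (sub_ne_zero.2 hxy)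
  have hadd : |(x : ℝ) + y| ≤ A := by
    rw [sq_sub_sq, abs_mul] at hsq
    exact (le_mul_of_one_le_right (abs_nonneg _) hone).trans hsq
  rw [abs_le] at hsub hadd ⊢
  constructor <;> linarith

lemma abs_le_of_sq_add_sq_le {x y : ℤ} {A : ℝ} (h : (x : ℝ) ^ 2 + (y : ℝ) ^ 2 ≤ A) :
    |(x : ℝ)| ≤ A := by
  have hx : |(x : ℝ)| ≤ (x : ℝ) ^ 2 := by
    rw [← sq_abs, ← Int.cast_abs]
    exact_mod_cast Int.le_self_sq |x|
  linarith [sq_nonneg (y : ℝ)]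

lemma abs_le_of_abs_signed_pair_le {x y : ℤ} {s t : ℝ} (hs : |s| = 1) (ht : |t| = 1)
    (hst : x = y → s = t) {A : ℝ} (hlin : |s * x + t * y| ≤ A)
    (hsq : |s * (x : ℝ) ^ 2 + t * (y : ℝ) ^ 2| ≤ A) : |(x : ℝ)| ≤ A := by
  rcases abs_eq_abs.1 (ht.trans hs.symm) with rfl | rfl
  · rw [← mul_add, abs_mul, hs, one_mul] at hsq
    exact abs_le_of_sq_add_sq_le ((le_abs_self _).trans hsq)
  · have hxy : x ≠ y := fun h => by
      have : s = 0 := self_eq_neg.1 (hst h)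
      simp [this] at hs
    rw [neg_mul, ← sub_eq_add_neg, ← mul_sub, abs_mul, hs, one_mul] at hlin hsq
    exact abs_le_of_abs_sub_le_of_abs_sq_sub_sq_le hxy hlin hsq

lemma one_le_two_rpow_mul_four_rpow {τ σ : ℝ} (hτ : 0 ≤ τ) (hσ : 0 ≤ σ) :
    (1 : ℝ) ≤ 2 ^ τ * 4 ^ σ :=
  one_le_mul_of_one_le_of_one_le (Real.one_le_rpow one_le_two hτ)
    (Real.one_le_rpow (by norm_num) hσ)

lemma rpow_mul_rpow_le_of_pow_four_mul_le {M P Q σ τ : ℝ} (hM : 0 ≤ M) (hP : 1 ≤ P) (hQ : 0 ≤ Q)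
    (hσ : 0 ≤ σ) (hτ : 10 * σ ≤ τ) (hMPQ : M ^ 4 * P ≤ 4 * Q ^ 2) (hQP : Q ≤ 4 * P ^ 5) :
    M ^ (2 * τ) * Q ^ σ ≤ 2 ^ τ * 4 ^ σ * Q ^ τ := by
  have hP0 : 0 ≤ P := zero_le_one.trans hP
  have hgain : M ^ (2 * τ) * P ^ (τ / 2) ≤ 2 ^ τ * Q ^ τ := by
    calc M ^ (2 * τ) * P ^ (τ / 2) = (M ^ 4 * P) ^ (τ / 2) := by
          rw [Real.mul_rpow (by positivity) hP0, ← Real.rpow_natCast_mul hM]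
          congr 2
          push_cast
          ring
      _ ≤ ((2 * Q) ^ 2) ^ (τ / 2) := by
          gcongr
          · linarith
          · linarith
      _ = 2 ^ τ * Q ^ τ := by
          rw [← Real.rpow_natCast_mul (by positivity), ← Real.mul_rpow zero_le_two hQ]
          congr 1
          push_cast
          ring
  have hloss : Q ^ σ ≤ 4 ^ σ * P ^ (τ / 2) := by
    calc Q ^ σ ≤ (4 * P ^ 5) ^ σ := by gcongr
      _ = 4 ^ σ * P ^ (5 * σ) := by
          rw [Real.mul_rpow (by norm_num) (by positivity), ← Real.rpow_natCast_mul hP0]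
          norm_num
      _ ≤ 4 ^ σ * P ^ (τ / 2) := by
          gcongr 4 ^ σ * ?_
          exact Real.rpow_le_rpow_of_exponent_le hP (by linarith)
  calc M ^ (2 * τ) * Q ^ σ ≤ M ^ (2 * τ) * (4 ^ σ * P ^ (τ / 2)) := by gcongr
    _ = 4 ^ σ * (M ^ (2 * τ) * P ^ (τ / 2)) := by ring
    _ ≤ 4 ^ σ * (2 ^ τ * Q ^ τ) := by gcongr
    _ = 2 ^ τ * 4 ^ σ * Q ^ τ := by ring

end Elementary

section Weights

lemma one_le_jap (j : ℤ) : 1 ≤ jap j := le_max_right _ _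

lemma le_of_mul_jap_rpow_le {q y c : ℝ} (hq : 0 ≤ q) (hy : 0 ≤ y) {j : ℤ}
    (h : y * jap j ^ q ≤ c) : y ≤ c :=
  (le_mul_of_one_le_right hy (Real.one_le_rpow (one_le_jap j) hq)).trans h

lemma two_le_jml (j : ℤ) : 2 ≤ jml j := le_max_right _ _

lemma one_le_jml (j : ℤ) : 1 ≤ jml j := one_le_two.trans (two_le_jml j)

lemma jml_nonneg (j : ℤ) : 0 ≤ jml j := zero_le_two.trans (two_le_jml j)

lemma abs_le_jml (j : ℤ) : |(j : ℝ)| ≤ jml j := le_max_left _ _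

lemma jap_le_jml (j : ℤ) : jap j ≤ jml j := max_le_max_left _ one_le_two

lemma one_add_sq_mul_jap_rpow_le {W : ℝ} (hW : 2 ≤ W) (n l : ℤ) :
    1 + (l : ℝ) ^ 2 * jap n ^ W ≤ (jml n ^ l.natAbs) ^ (3 / 2 * W) := by
  have hjml := jml_nonneg n
  have hz : 2 ≤ jml n ^ (W / 2) :=
    (two_le_jml n).trans (Real.self_le_rpow_of_one_le (one_le_jml n) (by linarith))
  calc 1 + (l : ℝ) ^ 2 * jap n ^ W ≤ 1 + (l : ℝ) ^ 2 * jml n ^ W := by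
        have := zero_le_one.trans (one_le_jap n)
        gcongr
        exact jap_le_jml n
    _ = 1 + (l.natAbs : ℝ) ^ 2 * (jml n ^ (W / 2)) ^ 2 := by
        rw [Nat.cast_natAbs, Int.cast_abs, sq_abs, ← Real.rpow_mul_natCast hjml]
        congr 3
        push_cast
        ring
    _ ≤ (jml n ^ (W / 2)) ^ (3 * l.natAbs) := one_add_sq_mul_sq_le_pow hz _
    _ = (jml n ^ l.natAbs) ^ (3 / 2 * W) := by
        rw [← Real.rpow_mul_natCast hjml, ← Real.rpow_natCast_mul hjml]
        congr 1
        push_cast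
        ring

/-- The Sobolev weight `∏ i, ⌈i⌉ ^ n i` of a multi-index `n`. -/
noncomputable def jmlProd (n : ℤ →₀ ℕ) : ℝ := n.prod fun i k => jml i ^ k

lemma jmlProd_add (m n : ℤ →₀ ℕ) : jmlProd (m + n) = jmlProd m * jmlProd n :=
  Finsupp.prod_add_index' (fun _ => pow_zero _) fun _ => pow_add _

lemma jmlProd_single (j : ℤ) (k : ℕ) : jmlProd (Finsupp.single j k) = jml j ^ k :=
  Finsupp.prod_single_index (pow_zero _)

lemma one_le_jmlProd (n : ℤ →₀ ℕ) : 1 ≤ jmlProd n :=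
  Finset.one_le_prod fun i _ => one_le_pow₀ (one_le_jml i)

lemma jmlProd_nonneg (n : ℤ →₀ ℕ) : 0 ≤ jmlProd n := zero_le_one.trans (one_le_jmlProd n)

lemma jmlProd_mono : Monotone jmlProd := fun m n hmn => by
  rw [← add_tsub_cancel_of_le hmn, jmlProd_add]
  exact le_mul_of_one_le_right (jmlProd_nonneg m) (one_le_jmlProd _)

lemma jmlProd_rpow {n : ℤ →₀ ℕ} {U : Finset ℤ} (hU : n.support ⊆ U) (τ : ℝ) :
    jmlProd n ^ τ = ∏ i ∈ U, jml i ^ (τ * n i) := by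
  rw [jmlProd, Finsupp.prod_of_support_subset n hU _ fun _ _ => pow_zero _,
    ← Real.finsetProd_rpow _ _ fun i _ => pow_nonneg (jml_nonneg i) _]
  refine Finset.prod_congr rfl fun i _ => ?_
  rw [← Real.rpow_natCast_mul (jml_nonneg i), mul_comm]

/-- The multi-index `|ℓ|`, counting how often each mode occurs in `ℓ` regardless of sign. -/
noncomputable def natAbsFinsupp {ι : Type*} (ℓ : ι →₀ ℤ) : ι →₀ ℕ :=
  ℓ.mapRange Int.natAbs Int.natAbs_zero

lemma prod_natAbsFinsupp {ι : Type*} (ℓ : ι →₀ ℤ) (f : ι → ℝ) :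
    ((natAbsFinsupp ℓ).prod fun i k => f i ^ k) = ∏ i ∈ ℓ.support, f i ^ (ℓ i).natAbs :=
  Finsupp.prod_mapRange_index fun _ => pow_zero _

lemma le_mul_jmlProd_rpow_of_diophantine {W γ D : ℝ} (hW : 2 ≤ W) (hD : 0 ≤ D) {ℓ : ℤ →₀ ℤ}
    (h : γ * ∏ n ∈ ℓ.support, (1 + (ℓ n : ℝ) ^ 2 * jap n ^ W)⁻¹ ≤ D) :
    γ ≤ D * jmlProd (natAbsFinsupp ℓ) ^ (3 / 2 * W) := by
  have hpos (n : ℤ) : 0 < 1 + (ℓ n : ℝ) ^ 2 * jap n ^ W := by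
    have := Real.rpow_nonneg (zero_le_one.trans (one_le_jap n)) W
    positivity
  rw [Finset.prod_inv_distrib, ← div_eq_mul_inv,
    div_le_iff₀ (Finset.prod_pos fun n _ => hpos n)] at h
  refine h.trans (mul_le_mul_of_nonneg_left ?_ hD)
  rw [jmlProd, prod_natAbsFinsupp,
    ← Real.finsetProd_rpow _ _ fun n _ => pow_nonneg (jml_nonneg n) _]
  exact Finset.prod_le_prod (fun n _ => (hpos n).le) fun n _ => one_add_sq_mul_jap_rpow_le hW n _

end Weights

/-- A finite list of modes `x a` with signs `s a = ± 1`, of zero total mass and zero momentum, in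
which no mode occurs with both signs. It encodes the modes of `ℓ = α - β`, repeated according to
multiplicity; the signs are real numbers so that sums over the list need no casts. -/
structure IsBalanced {ι : Type*} (T : Finset ι) (s : ι → ℝ) (x : ι → ℤ) : Prop where
  abs_sign : ∀ a ∈ T, |s a| = 1
  sign_eq : ∀ a ∈ T, ∀ b ∈ T, x a = x b → s a = s b
  mass : ∑ a ∈ T, s a = 0
  momentum : ∑ a ∈ T, s a * x a = 0

namespace IsBalanced

variable {ι : Type*} {T : Finset ι} {s : ι → ℝ} {x : ι → ℤ} {a b : ι} {ω : ℤ → ℝ}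

lemma abs_sum_mul_sq_le (h : IsBalanced T s x) (hω : ∀ n : ℤ, |ω n - (n : ℝ) ^ 2| ≤ 1 / 2) :
    |∑ c ∈ T, s c * (x c : ℝ) ^ 2| ≤ |∑ c ∈ T, s c * ω (x c)| + T.card / 2 := by
  have hsplit : ∑ c ∈ T, s c * (x c : ℝ) ^ 2 =
      ∑ c ∈ T, s c * ω (x c) - ∑ c ∈ T, s c * (ω (x c) - (x c : ℝ) ^ 2) := by
    rw [← Finset.sum_sub_distrib]
    exact Finset.sum_congr rfl fun c _ => by ring
  rw [hsplit]
  refine (abs_sub _ _).trans (add_le_add_right ?_ _)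
  calc |∑ c ∈ T, s c * (ω (x c) - (x c : ℝ) ^ 2)|
      ≤ ∑ c ∈ T, |ω (x c) - (x c : ℝ) ^ 2| := abs_sum_mul_le_of_abs_eq_one h.abs_sign _
    _ ≤ T.card • (1 / 2 : ℝ) := Finset.sum_le_card_nsmul _ _ _ fun c _ => hω _
    _ = T.card / 2 := by rw [nsmul_eq_mul]; ring

section DecidableEq

variable [DecidableEq ι]

lemma erase_nonempty (h : IsBalanced T s x) (ha : a ∈ T) : (T.erase a).Nonempty := by
  by_contra hempty
  have hsum := Finset.add_sum_erase T s ha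
  rw [Finset.not_nonempty_iff_eq_empty.1 hempty, h.mass, Finset.sum_empty, add_zero] at hsum
  simpa [hsum] using h.abs_sign a ha

lemma erase_erase_nonempty (h : IsBalanced T s x) (ha : a ∈ T) (hb : b ∈ T.erase a) :
    ((T.erase a).erase b).Nonempty := by
  by_contra hempty
  have hbT := Finset.mem_of_mem_erase hb
  have hpair (f : ι → ℝ) (hf : ∑ c ∈ T, s c * f c = 0) : s a * f a + s b * f b = 0 := by
    have := abs_pair_le_of_abs_eq_one h.abs_sign ha hb f
    rw [hf, Finset.not_nonempty_iff_eq_empty.1 hempty] at this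
    simpa using this
  have hsa : s a ≠ 0 := fun h0 => by simpa [h0] using h.abs_sign a ha
  have hsb : s b = -s a := by
    linarith [hpair (fun _ => 1) (by simpa using h.mass)]
  have hx : x a = x b := by
    have := hpair (fun c => x c) h.momentum
    rw [hsb, neg_mul, ← sub_eq_add_neg, ← mul_sub] at this
    exact_mod_cast sub_eq_zero.1 ((mul_eq_zero.1 this).resolve_left hsa)
  exact hsa (self_eq_neg.1 ((h.sign_eq a ha b hbT hx).trans hsb))

lemma abs_mode_le_sum (h : IsBalanced T s x) (ha : a ∈ T) :
    |(x a : ℝ)| ≤ ∑ c ∈ T.erase a, |(x c : ℝ)| := by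
  have hmom := h.momentum
  rw [← Finset.add_sum_erase T _ ha] at hmom
  calc |(x a : ℝ)| = |s a * x a| := by rw [abs_mul, h.abs_sign a ha, one_mul]
    _ = |∑ c ∈ T.erase a, s c * x c| := by rw [eq_neg_of_add_eq_zero_left hmom, abs_neg]
    _ ≤ ∑ c ∈ T.erase a, |(x c : ℝ)| :=
      abs_sum_mul_le_of_abs_eq_one (fun c hc => h.abs_sign c (Finset.mem_of_mem_erase hc)) _

lemma jml_le_prod_erase (h : IsBalanced T s x) (ha : a ∈ T) :
    jml (x a) ≤ ∏ c ∈ T.erase a, jml (x c) := by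
  have hne := h.erase_nonempty ha
  refine max_le ?_ (two_le_prod hne fun c _ => two_le_jml _)
  calc |(x a : ℝ)| ≤ ∑ c ∈ T.erase a, |(x c : ℝ)| := h.abs_mode_le_sum ha
    _ ≤ ∑ c ∈ T.erase a, jml (x c) := Finset.sum_le_sum fun c _ => abs_le_jml _
    _ ≤ ∏ c ∈ T.erase a, jml (x c) := sum_le_prod_of_two_le hne fun c _ => two_le_jml _

lemma jml_le_card_mul_jml (h : IsBalanced T s x) (ha : a ∈ T)
    (hmax : ∀ c ∈ T.erase a, jml (x c) ≤ jml (x b)) :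
    jml (x a) ≤ (T.erase a).card * jml (x b) := by
  have hcard : (1 : ℝ) ≤ (T.erase a).card := mod_cast (h.erase_nonempty ha).card_pos
  refine max_le ?_ (by nlinarith [two_le_jml (x b)])
  rw [← nsmul_eq_mul]
  exact (h.abs_mode_le_sum ha).trans
    (Finset.sum_le_card_nsmul _ _ _ fun c hc => (abs_le_jml _).trans (hmax c hc))

lemma jml_pow_four_mul_prod_le (h : IsBalanced T s x) (ha : a ∈ T) (hb : b ∈ T.erase a)
    (hmax : ∀ c ∈ T.erase a, jml (x c) ≤ jml (x b)) :
    jml (x a) ^ 4 * ∏ c ∈ (T.erase a).erase b, jml (x c) ≤ 4 * (∏ c ∈ T, jml (x c)) ^ 2 := by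
  rw [← Finset.mul_prod_erase T _ ha, ← Finset.mul_prod_erase (T.erase a) _ hb]
  set R := (T.erase a).erase b
  set P := ∏ c ∈ R, jml (x c)
  have hP0 : 0 ≤ P := Finset.prod_nonneg fun c _ => jml_nonneg _
  have hcard : ((T.erase a).card : ℝ) ^ 2 ≤ 4 * P := by
    calc ((T.erase a).card : ℝ) ^ 2 ≤ 2 * 2 ^ (T.erase a).card :=
          mod_cast le_trans (by lia) (sq_add_self_add_two_le_two_mul_two_pow (T.erase a).card)
      _ = 4 * ∏ _c ∈ R, (2 : ℝ) := by
          rw [← Finset.card_erase_add_one hb, pow_succ, Finset.prod_const]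
          ring
      _ ≤ 4 * P := by
          gcongr 4 * ?_
          exact Finset.prod_le_prod (fun _ _ => zero_le_two) fun c _ => two_le_jml _
  have hsq : jml (x a) ^ 2 ≤ 4 * P * jml (x b) ^ 2 := by
    calc jml (x a) ^ 2 ≤ ((T.erase a).card * jml (x b)) ^ 2 :=
          pow_le_pow_left₀ (jml_nonneg _) (h.jml_le_card_mul_jml ha hmax) 2
      _ = (T.erase a).card ^ 2 * jml (x b) ^ 2 := mul_pow _ _ _
      _ ≤ 4 * P * jml (x b) ^ 2 := by gcongr
  calc jml (x a) ^ 4 * P = jml (x a) ^ 2 * (jml (x a) ^ 2 * P) := by ring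
    _ ≤ 4 * P * jml (x b) ^ 2 * (jml (x a) ^ 2 * P) := by gcongr
    _ = 4 * (jml (x a) * (jml (x b) * P)) ^ 2 := by ring

lemma abs_pair_momentum_le (h : IsBalanced T s x) (ha : a ∈ T) (hb : b ∈ T.erase a) :
    |s a * x a + s b * x b| ≤ ∑ c ∈ (T.erase a).erase b, jml (x c) ^ 2 := by
  have hpair := abs_pair_le_of_abs_eq_one h.abs_sign ha hb fun c => (x c : ℝ)
  rw [h.momentum, abs_zero, zero_add] at hpair
  exact hpair.trans <| Finset.sum_le_sum fun c _ =>
    (abs_le_jml _).trans (le_self_pow₀ (one_le_jml _) two_ne_zero)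

lemma abs_pair_energy_le (h : IsBalanced T s x)
    (hω : ∀ n : ℤ, |ω n - (n : ℝ) ^ 2| ≤ 1 / 2) (hsmall : |∑ c ∈ T, s c * ω (x c)| < 1)
    (ha : a ∈ T) (hb : b ∈ T.erase a) :
    |s a * (x a : ℝ) ^ 2 + s b * (x b : ℝ) ^ 2| ≤
      2 * ∑ c ∈ (T.erase a).erase b, jml (x c) ^ 2 := by
  have hpair := abs_pair_le_of_abs_eq_one h.abs_sign ha hb fun c => (x c : ℝ) ^ 2
  have hcard : (T.card : ℝ) = ((T.erase a).erase b).card + 2 := by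
    rw [← Finset.card_erase_add_one ha, ← Finset.card_erase_add_one hb]
    push_cast
    ring
  have hcard_pos : (1 : ℝ) ≤ ((T.erase a).erase b).card :=
    mod_cast (h.erase_erase_nonempty ha hb).card_pos
  set R := (T.erase a).erase b
  have hcard_le : (R.card : ℝ) * 4 ≤ ∑ c ∈ R, jml (x c) ^ 2 := by
    rw [← nsmul_eq_mul]
    exact Finset.card_nsmul_le_sum _ _ _ fun c _ => by nlinarith [two_le_jml (x c)]
  have hsum : ∑ c ∈ R, |(x c : ℝ) ^ 2| ≤ ∑ c ∈ R, jml (x c) ^ 2 :=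
    Finset.sum_le_sum fun c _ => by
      rw [abs_pow]
      exact pow_le_pow_left₀ (abs_nonneg _) (abs_le_jml _) 2
  linarith [h.abs_sum_mul_sq_le hω]

lemma jml_le_two_mul_prod_sq (h : IsBalanced T s x)
    (hω : ∀ n : ℤ, |ω n - (n : ℝ) ^ 2| ≤ 1 / 2) (hsmall : |∑ c ∈ T, s c * ω (x c)| < 1)
    (ha : a ∈ T) (hb : b ∈ T.erase a) :
    jml (x a) ≤ 2 * (∏ c ∈ (T.erase a).erase b, jml (x c)) ^ 2 := by
  have hbT := Finset.mem_of_mem_erase hb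
  have hmom := h.abs_pair_momentum_le ha hb
  have henergy := h.abs_pair_energy_le hω hsmall ha hb
  have hRne := h.erase_erase_nonempty ha hb
  set R := (T.erase a).erase b
  have hsum_le : ∑ c ∈ R, jml (x c) ^ 2 ≤ (∏ c ∈ R, jml (x c)) ^ 2 := by
    rw [← Finset.prod_pow]
    exact sum_le_prod_of_two_le hRne fun c _ => by nlinarith [two_le_jml (x c)]
  have hprod : 2 ≤ ∏ c ∈ R, jml (x c) := two_le_prod hRne fun c _ => two_le_jml _
  refine max_le ?_ (by nlinarith)
  exact abs_le_of_abs_signed_pair_le (h.abs_sign a ha) (h.abs_sign b hbT)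
    (h.sign_eq a ha b hbT) (by linarith [abs_nonneg (s a * x a + s b * x b)]) (by linarith)

lemma prod_le_four_mul_prod_pow_five (h : IsBalanced T s x)
    (hω : ∀ n : ℤ, |ω n - (n : ℝ) ^ 2| ≤ 1 / 2) (hsmall : |∑ c ∈ T, s c * ω (x c)| < 1)
    (ha : a ∈ T) (hb : b ∈ T.erase a) :
    ∏ c ∈ T, jml (x c) ≤ 4 * (∏ c ∈ (T.erase a).erase b, jml (x c)) ^ 5 := by
  have hxa := h.jml_le_two_mul_prod_sq hω hsmall ha hb
  have hxb : jml (x b) ≤ 2 * (∏ c ∈ (T.erase a).erase b, jml (x c)) ^ 2 := by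
    rw [Finset.erase_right_comm]
    exact h.jml_le_two_mul_prod_sq hω hsmall (Finset.mem_of_mem_erase hb)
      (Finset.mem_erase.2 ⟨(Finset.ne_of_mem_erase hb).symm, ha⟩)
  rw [← Finset.mul_prod_erase T _ ha, ← Finset.mul_prod_erase (T.erase a) _ hb]
  set P := ∏ c ∈ (T.erase a).erase b, jml (x c)
  have hP0 : 0 ≤ P := Finset.prod_nonneg fun c _ => jml_nonneg _
  have := jml_nonneg (x b)
  calc jml (x a) * (jml (x b) * P) ≤ 2 * P ^ 2 * (2 * P ^ 2 * P) := by gcongr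
    _ = 4 * P ^ 5 := by ring

end DecidableEq

lemma jml_sq_le_prod (h : IsBalanced T s x) (ha : a ∈ T) :
    jml (x a) ^ 2 ≤ ∏ c ∈ T, jml (x c) := by
  classical
  rw [← Finset.mul_prod_erase T _ ha, sq]
  exact mul_le_mul_of_nonneg_left (h.jml_le_prod_erase ha) (jml_nonneg _)

lemma jml_rpow_mul_prod_rpow_le (h : IsBalanced T s x)
    (hω : ∀ n : ℤ, |ω n - (n : ℝ) ^ 2| ≤ 1 / 2) (hsmall : |∑ c ∈ T, s c * ω (x c)| < 1)
    {σ τ : ℝ} (hσ : 0 ≤ σ) (hτ : 10 * σ ≤ τ) (ha : a ∈ T) :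
    jml (x a) ^ (2 * τ) * (∏ c ∈ T, jml (x c)) ^ σ ≤
      2 ^ τ * 4 ^ σ * (∏ c ∈ T, jml (x c)) ^ τ := by
  classical
  obtain ⟨b, hb, hmax⟩ := (T.erase a).exists_max_image (fun c => jml (x c)) (h.erase_nonempty ha)
  exact rpow_mul_rpow_le_of_pow_four_mul_le (jml_nonneg _)
    (Finset.one_le_prod fun c _ => one_le_jml _) (Finset.prod_nonneg fun c _ => jml_nonneg _)
    hσ hτ (h.jml_pow_four_mul_prod_le ha hb hmax)
    (h.prod_le_four_mul_prod_pow_five hω hsmall ha hb)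

lemma small_divisor_estimate (h : IsBalanced T s x)
    (hω : ∀ n : ℤ, |ω n - (n : ℝ) ^ 2| ≤ 1 / 2) {σ τ γ : ℝ} (hσ : 0 ≤ σ) (hτ : 10 * σ ≤ τ)
    (hγ : γ ≤ 1) (hdiv : γ ≤ |∑ c ∈ T, s c * ω (x c)| * (∏ c ∈ T, jml (x c)) ^ σ) (ha : a ∈ T) :
    γ * jml (x a) ^ (2 * τ) ≤
      2 ^ τ * 4 ^ σ * |∑ c ∈ T, s c * ω (x c)| * (∏ c ∈ T, jml (x c)) ^ τ := by
  have hτ0 : 0 ≤ τ := by linarith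
  have hMτ : 0 ≤ jml (x a) ^ (2 * τ) := Real.rpow_nonneg (jml_nonneg _) _
  rcases lt_or_ge |∑ c ∈ T, s c * ω (x c)| 1 with hsmall | hlarge
  · have hkey := h.jml_rpow_mul_prod_rpow_le hω hsmall hσ hτ ha
    set D := |∑ c ∈ T, s c * ω (x c)|
    set Q := ∏ c ∈ T, jml (x c)
    calc γ * jml (x a) ^ (2 * τ) ≤ D * Q ^ σ * jml (x a) ^ (2 * τ) := by gcongr
      _ = D * (jml (x a) ^ (2 * τ) * Q ^ σ) := by ring
      _ ≤ D * (2 ^ τ * 4 ^ σ * Q ^ τ) := by gcongr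
      _ = 2 ^ τ * 4 ^ σ * D * Q ^ τ := by ring
  · calc γ * jml (x a) ^ (2 * τ) ≤ jml (x a) ^ (2 * τ) := mul_le_of_le_one_left hMτ hγ
      _ = (jml (x a) ^ 2) ^ τ := by
          rw [← Real.rpow_natCast_mul (jml_nonneg _), Nat.cast_ofNat]
      _ ≤ (∏ c ∈ T, jml (x c)) ^ τ :=
          Real.rpow_le_rpow (sq_nonneg _) (h.jml_sq_le_prod ha) hτ0
      _ ≤ 2 ^ τ * 4 ^ σ * |∑ c ∈ T, s c * ω (x c)| * (∏ c ∈ T, jml (x c)) ^ τ :=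
          le_mul_of_one_le_left
            (Real.rpow_nonneg (Finset.prod_nonneg fun c _ => jml_nonneg _) _)
            (one_le_mul_of_one_le_of_one_le (one_le_two_rpow_mul_four_rpow hτ0 hσ) hlarge)

end IsBalanced

section Copies

variable {ι : Type*}

/-- The elements of the support of `ℓ` listed with multiplicity: the pairs `⟨i, k⟩` with
`k < |ℓ i|`. -/
def copies (ℓ : ι →₀ ℤ) : Finset (Σ _ : ι, ℕ) :=
  ℓ.support.sigma fun i => Finset.range (ℓ i).natAbs

lemma ne_zero_of_mem_copies {ℓ : ι →₀ ℤ} {a : Σ _ : ι, ℕ} (ha : a ∈ copies ℓ) : ℓ a.1 ≠ 0 :=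
  Finsupp.mem_support_iff.1 (Finset.mem_sigma.1 ha).1

lemma mk_zero_mem_copies {ℓ : ι →₀ ℤ} {i : ι} (hi : ℓ i ≠ 0) : ⟨i, 0⟩ ∈ copies ℓ :=
  Finset.mem_sigma.2 ⟨Finsupp.mem_support_iff.2 hi, Finset.mem_range.2 (Int.natAbs_pos.2 hi)⟩

lemma sum_copies_sign_mul (ℓ : ι →₀ ℤ) (f : ι → ℝ) :
    ∑ a ∈ copies ℓ, ((ℓ a.1).sign : ℝ) * f a.1 = ∑ i ∈ ℓ.support, f i * ℓ i := by
  rw [copies, Finset.sum_sigma]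
  refine Finset.sum_congr rfl fun i _ => ?_
  have hsign : ((ℓ i).sign : ℝ) * (ℓ i).natAbs = ℓ i := by
    rw [← Int.cast_natCast, ← Int.cast_mul, Int.sign_mul_natAbs]
  calc ∑ _k ∈ Finset.range (ℓ i).natAbs, ((ℓ i).sign : ℝ) * f i
      = f i * (((ℓ i).sign : ℝ) * (ℓ i).natAbs) := by
        rw [Finset.sum_const, Finset.card_range, nsmul_eq_mul]
        ring
    _ = f i * ℓ i := by rw [hsign]

lemma prod_copies (ℓ : ι →₀ ℤ) (f : ι → ℝ) :
    ∏ a ∈ copies ℓ, f a.1 = ∏ i ∈ ℓ.support, f i ^ (ℓ i).natAbs := by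
  simp [copies, Finset.prod_sigma]

lemma isBalanced_copies {ℓ : ℤ →₀ ℤ} (hmass : ∑ i ∈ ℓ.support, (ℓ i : ℝ) = 0)
    (hmom : ∑ i ∈ ℓ.support, (i : ℝ) * ℓ i = 0) :
    IsBalanced (copies ℓ) (fun a => ((ℓ a.1).sign : ℝ)) Sigma.fst where
  abs_sign a ha := by
    rw [← Int.cast_abs, Int.abs_sign_of_ne_zero (ne_zero_of_mem_copies ha), Int.cast_one]
  sign_eq a _ b _ hab := by rw [hab]
  mass := by simpa [hmass] using sum_copies_sign_mul ℓ fun _ => 1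
  momentum := (sum_copies_sign_mul ℓ _).trans hmom

lemma small_divisor_estimate_of_ne_zero {ω : ℤ → ℝ}
    (hω : ∀ n : ℤ, |ω n - (n : ℝ) ^ 2| ≤ 1 / 2) {σ τ γ : ℝ} (hσ : 0 ≤ σ) (hτ : 10 * σ ≤ τ)
    (hγ : γ ≤ 1) {ℓ : ℤ →₀ ℤ} (hmass : ∑ i ∈ ℓ.support, (ℓ i : ℝ) = 0)
    (hmom : ∑ i ∈ ℓ.support, (i : ℝ) * ℓ i = 0)
    (hdiv : γ ≤ |∑ i ∈ ℓ.support, ω i * ℓ i| * jmlProd (natAbsFinsupp ℓ) ^ σ)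
    {j : ℤ} (hj : ℓ j ≠ 0) :
    γ * jml j ^ (2 * τ) ≤
      2 ^ τ * 4 ^ σ * |∑ i ∈ ℓ.support, ω i * ℓ i| * jmlProd (natAbsFinsupp ℓ) ^ τ := by
  rw [jmlProd, prod_natAbsFinsupp, ← prod_copies, ← sum_copies_sign_mul] at hdiv ⊢
  have hestimate := (isBalanced_copies hmass hmom).small_divisor_estimate hω hσ hτ hγ hdiv
    (mk_zero_mem_copies hj)
  exact hestimate

end Copies

section Difference

variable {ι : Type*}

/-- The difference `α - β` of two multi-indices, with values in `ℤ` so that it is not truncated. -/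
noncomputable def intSub (α β : ι →₀ ℕ) : ι →₀ ℤ :=
  α.mapRange Nat.cast Nat.cast_zero - β.mapRange Nat.cast Nat.cast_zero

lemma intSub_apply (α β : ι →₀ ℕ) (i : ι) : intSub α β i = (α i : ℤ) - β i := by
  simp [intSub]

lemma intSub_ne_zero {α β : ι →₀ ℕ} (h : α ≠ β) : intSub α β ≠ 0 := fun h0 => h <| by
  ext i
  have := intSub_apply α β i
  rw [h0, Finsupp.zero_apply] at this
  lia

lemma sum_union_mul_sub [DecidableEq ι] (α β : ι →₀ ℕ) (f : ι → ℝ) :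
    ∑ i ∈ α.support ∪ β.support, f i * ((α i : ℝ) - β i) =
      ∑ i ∈ (intSub α β).support, f i * intSub α β i := by
  have hsupp : (intSub α β).support ⊆ α.support ∪ β.support := fun i hi => by
    rw [Finsupp.mem_support_iff, intSub_apply] at hi
    simp only [Finset.mem_union, Finsupp.mem_support_iff]
    lia
  symm
  refine (Finset.sum_subset hsupp fun i _ hi => ?_).trans (Finset.sum_congr rfl fun i _ => ?_)
  · rw [Finsupp.notMem_support_iff.1 hi, Int.cast_zero, mul_zero]
  · rw [intSub_apply]
    push_cast
    rfl

lemma sum_intSub_eq_zero {α β : ι →₀ ℕ} (h : (α.sum fun _ n => n) = β.sum fun _ n => n) :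
    ∑ i ∈ (intSub α β).support, (intSub α β i : ℝ) = 0 := by
  classical
  rw [α.sum_of_support_subset Finset.subset_union_left _ fun _ _ => rfl,
    β.sum_of_support_subset Finset.subset_union_right _ fun _ _ => rfl] at h
  calc ∑ i ∈ (intSub α β).support, (intSub α β i : ℝ)
      = ∑ i ∈ α.support ∪ β.support, ((α i : ℝ) - β i) := by
        simpa using (sum_union_mul_sub α β fun _ => 1).symm
    _ = 0 := by
        rw [Finset.sum_sub_distrib, sub_eq_zero]
        exact_mod_cast h

lemma natAbsFinsupp_intSub_apply (α β : ι →₀ ℕ) (i : ι) :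
    natAbsFinsupp (intSub α β) i = ((α i : ℤ) - β i).natAbs := by
  rw [natAbsFinsupp, Finsupp.mapRange_apply, intSub_apply]

lemma natAbsFinsupp_intSub_le_add (α β : ι →₀ ℕ) : natAbsFinsupp (intSub α β) ≤ α + β := fun i => by
  rw [natAbsFinsupp_intSub_apply, Finsupp.add_apply]
  lia

lemma natAbsFinsupp_intSub_add_single_le_add {α β : ι →₀ ℕ} {j : ι} (hj : intSub α β j = 0)
    (hpos : 1 ≤ α j + β j) :
    natAbsFinsupp (intSub α β) + Finsupp.single j 2 ≤ α + β := fun i => by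
  classical
  rw [intSub_apply] at hj
  rw [Finsupp.add_apply, Finsupp.add_apply, natAbsFinsupp_intSub_apply, Finsupp.single_apply]
  split_ifs with hij
  · subst hij
    lia
  · lia

lemma jmlProd_rpow_mul_jml_rpow_le_of_intSub_eq_zero {α β : ℤ →₀ ℕ} {j : ℤ} (hj : intSub α β j = 0)
    (hpos : 1 ≤ α j + β j) {τ : ℝ} (hτ : 0 ≤ τ) :
    jmlProd (natAbsFinsupp (intSub α β)) ^ τ * jml j ^ (2 * τ) ≤ jmlProd (α + β) ^ τ := by
  have hle := jmlProd_mono (natAbsFinsupp_intSub_add_single_le_add hj hpos)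
  rw [jmlProd_add, jmlProd_single] at hle
  have hQ := jmlProd_nonneg (natAbsFinsupp (intSub α β))
  calc jmlProd (natAbsFinsupp (intSub α β)) ^ τ * jml j ^ (2 * τ)
      = (jmlProd (natAbsFinsupp (intSub α β)) * jml j ^ 2) ^ τ := by
        rw [Real.mul_rpow hQ (sq_nonneg _), ← Real.rpow_natCast_mul (jml_nonneg _),
          Nat.cast_ofNat]
    _ ≤ jmlProd (α + β) ^ τ := by gcongr

end Difference

section SmallDivisor

lemma small_divisor_estimate_intSub {ω : ℤ → ℝ} (hω : ∀ n : ℤ, |ω n - (n : ℝ) ^ 2| ≤ 1 / 2)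
    {σ τ γ : ℝ} (hσ : 0 ≤ σ) (hτ : 10 * σ ≤ τ) (hγ : γ ≤ 1) {α β : ℤ →₀ ℕ}
    (hmass : (α.sum fun _ n => n) = β.sum fun _ n => n)
    (hmom : ∑ i ∈ (intSub α β).support, (i : ℝ) * intSub α β i = 0)
    (hdiv : γ ≤ |∑ i ∈ (intSub α β).support, ω i * intSub α β i| *
      jmlProd (natAbsFinsupp (intSub α β)) ^ σ)
    {j : ℤ} (hj : 1 ≤ α j + β j) :
    γ * jml j ^ (2 * τ) ≤
      2 ^ τ * 4 ^ σ * |∑ i ∈ (intSub α β).support, ω i * intSub α β i| *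
        jmlProd (α + β) ^ τ := by
  have hτ0 : 0 ≤ τ := by linarith
  have hQ0 := jmlProd_nonneg (natAbsFinsupp (intSub α β))
  by_cases hcancel : intSub α β j = 0
  · set D := |∑ i ∈ (intSub α β).support, ω i * intSub α β i|
    have hweight := jmlProd_rpow_mul_jml_rpow_le_of_intSub_eq_zero hcancel hj hτ0
    have hQ1 := one_le_jmlProd (natAbsFinsupp (intSub α β))
    set Q := jmlProd (natAbsFinsupp (intSub α β))
    have hD : 0 ≤ D := abs_nonneg _
    have hM : 0 ≤ jml j ^ (2 * τ) := Real.rpow_nonneg (jml_nonneg j) _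
    calc γ * jml j ^ (2 * τ) ≤ D * Q ^ σ * jml j ^ (2 * τ) := by gcongr
      _ ≤ D * Q ^ τ * jml j ^ (2 * τ) := by
          gcongr D * ?_ * _
          exact Real.rpow_le_rpow_of_exponent_le hQ1 (by linarith)
      _ = D * (Q ^ τ * jml j ^ (2 * τ)) := mul_assoc _ _ _
      _ ≤ D * jmlProd (α + β) ^ τ := by gcongr
      _ ≤ 2 ^ τ * 4 ^ σ * D * jmlProd (α + β) ^ τ := by
          have := Real.rpow_nonneg (jmlProd_nonneg (α + β)) τ
          gcongr
          exact le_mul_of_one_le_left hD (one_le_two_rpow_mul_four_rpow hτ0 hσ)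
  · refine (small_divisor_estimate_of_ne_zero hω hσ hτ hγ (sum_intSub_eq_zero hmass) hmom
      hdiv hcancel).trans ?_
    gcongr
    exact jmlProd_mono (natAbsFinsupp_intSub_le_add α β)

theorem modified_sobolev_small_divisor_estimate_general {W τ γ : ℝ} (hW : 2 ≤ W)
    (hτ : 15 * W ≤ τ) (hγ : γ ≤ 1) {ω : ℤ → ℝ} (hω : ∀ n : ℤ, |ω n - (n : ℝ) ^ 2| ≤ 1 / 2)
    (hdio : ∀ ℓ : ℤ →₀ ℤ, ℓ ≠ 0 →
      γ * ∏ n ∈ ℓ.support, (1 + (ℓ n : ℝ) ^ 2 * jap n ^ W)⁻¹ <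
        |∑ n ∈ ℓ.support, ω n * (ℓ n : ℝ)|)
    {α β : ℤ →₀ ℕ} (hne : α ≠ β) (hmass : (α.sum fun _ n => n) = β.sum fun _ n => n)
    (hmom : ∑ i ∈ α.support ∪ β.support, (i : ℝ) * ((α i : ℝ) - (β i : ℝ)) = 0)
    {j : ℤ} (hj : 1 ≤ α j + β j) :
    γ * jml j ^ (2 * τ) ≤
      2 ^ τ * 8 ^ W * |∑ i ∈ α.support ∪ β.support, ω i * ((α i : ℝ) - (β i : ℝ))| *
        ∏ i ∈ α.support ∪ β.support, jml i ^ (τ * ((α i : ℝ) + (β i : ℝ))) := by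
  have hconst : (4 : ℝ) ^ (3 / 2 * W) = 8 ^ W := by
    rw [Real.rpow_mul (by norm_num), show (4 : ℝ) = 2 ^ (2 : ℝ) by norm_num,
      ← Real.rpow_mul zero_le_two]
    norm_num
  have hweight : ∏ i ∈ α.support ∪ β.support, jml i ^ (τ * ((α i : ℝ) + (β i : ℝ))) =
      jmlProd (α + β) ^ τ := by
    simp [jmlProd_rpow Finsupp.support_add]
  rw [sum_union_mul_sub] at hmom ⊢
  rw [hweight, ← hconst]
  exact small_divisor_estimate_intSub hω (by linarith) (by linarith) hγ hmass hmom
    (le_mul_jmlProd_rpow_of_diophantine hW (abs_nonneg _) (hdio _ (intSub_ne_zero hne)).le) hj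

lemma fifteen_mul_le_two_mul_mul {W : ℝ} (hW : 0 ≤ W) :
    15 * W ≤ 2 * (15 / 2 + 3 / (2 * Real.log 2)) * W := by
  have : 0 ≤ 3 / (2 * Real.log 2) := by positivity
  gcongr
  linarith

lemma two_rpow_mul_eight_rpow_le {W τ : ℝ} (hW : 0 ≤ W) (hτ : 0 ≤ τ) :
    (2 : ℝ) ^ τ * 8 ^ W ≤ 6 ^ τ * ((4 : ℝ) ^ (6 : ℕ) * Real.exp 27) ^ W := by
  have := Real.one_le_exp (show (0 : ℝ) ≤ 27 by norm_num)
  gcongr <;> linarith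

end SmallDivisor

/-- (Homological-equation small-divisor estimate, modified Sobolev,
momentum-preserving case.) Under the Diophantine conditions on `ω`, with
`τ₁ := 2(15/2 + 3/(2 ln 2))(2+q)`, for all finitely supported `α ≠ β : ℤ → ℕ` with equal
total mass `≥ 1` and zero momentum, and every `j` with `α_j + β_j ≥ 1`,
`γ⌈j⌉^{2τ₁} ≤ 6^{τ₁}(4⁶e^{27})^{2+q}|∑ ω_i(α_i−β_i)|∏_i ⌈i⌉^{τ₁(α_i+β_i)}`. -/
theorem modified_sobolev_small_divisor_estimate
    (q γ : ℝ) (hq : 0 ≤ q) (hγ0 : 0 < γ) (hγ1 : γ ≤ 1)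
    (ω : ℤ → ℝ)
    (hω : ∀ j : ℤ, |ω j - (j : ℝ) ^ 2| * jap j ^ q ≤ 1 / 2)
    (hdio : ∀ ℓ : ℤ →₀ ℤ, ℓ ≠ 0 →
      γ * ∏ n ∈ ℓ.support, (1 + (ℓ n : ℝ) ^ 2 * jap n ^ (2 + q))⁻¹ <
        |∑ n ∈ ℓ.support, ω n * (ℓ n : ℝ)|)
    (α β : ℤ →₀ ℕ) (hne : α ≠ β)
    (hmass : (α.sum fun _ n => n) = β.sum fun _ n => n)
    (hmass1 : 1 ≤ α.sum fun _ n => n)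
    (hmom : ∑ i ∈ α.support ∪ β.support, (i : ℝ) * ((α i : ℝ) - (β i : ℝ)) = 0)
    (j : ℤ) (hj : 1 ≤ α j + β j) :
    γ * jml j ^ (2 * (2 * (15 / 2 + 3 / (2 * Real.log 2)) * (2 + q))) ≤
      (6 : ℝ) ^ (2 * (15 / 2 + 3 / (2 * Real.log 2)) * (2 + q)) *
        ((4 : ℝ) ^ (6 : ℕ) * Real.exp 27) ^ (2 + q) *
        |∑ i ∈ α.support ∪ β.support, ω i * ((α i : ℝ) - (β i : ℝ))| *
        ∏ i ∈ α.support ∪ β.support,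
          jml i ^ ((2 * (15 / 2 + 3 / (2 * Real.log 2)) * (2 + q)) *
            ((α i : ℝ) + (β i : ℝ))) := by
  have hτ := fifteen_mul_le_two_mul_mul (show 0 ≤ 2 + q by linarith)
  refine (modified_sobolev_small_divisor_estimate_general (by linarith) hτ hγ1
    (fun n => le_of_mul_jap_rpow_le hq (abs_nonneg _) (hω n)) hdio hne hmass hmom hj).trans ?_
  gcongr ?_ * _ * _
  · exact Finset.prod_nonneg fun i _ => Real.rpow_nonneg (jml_nonneg i) _
  · exact two_rpow_mul_eight_rpow_le (by linarith) (by linarith)
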